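/- arXiv:2401.03204 — 2 statements merged into one kernel-verified Lean document; each statement's English description precedes it below -/
import Mathlib

section
/- Part (2) of Lemma 5: 4·(1 + η₂ + 2η₁ + 3η₀)·(1 + η₀ + 2η₃ + 3η₂) ≡ −2(1+4y)·H + 5p + 1 (mod (4^p − 1)/3). -/
/-!
Let `ζ` be a primitive `p`-th root of unity. Replacing the base `4` by `ζ` turns the `η_i` into the
Gaussian periods of order four. Let `χ` be the quartic character with `χ θ = I`, and let `g`, `s`,
`g'` be the Gauss sums of `χ`, `χ²`, `χ⁻¹`. Orthogonality gives
`4 η_i = -1 + (-I)^i g + (-1)^i s + I^i g'`, so the two factors become `(s - 1 ± T) / 2` with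
`T = (1 - I) g + (1 + I) g'`. Since `g² = J s`, `g'² = conj J * s` and `g g' = -p` for the Jacobi
sum `J = J(χ, χ)`, both `s² = p` and `T² = 4 Im(J) s - 4 p` are known, and the product is determined
by `Im J`.

The Gaussian integer `J` has norm `p`, and the cyclotomic number `(0,1)₄` is a linear function of
`Re J + 2 Im J`. This forces `Im J = 2y`. The resulting identity between polynomials evaluated at
`ζ` holds modulo `Φ_p(X) = ∑ X^i` in `ℤ[X]`, so it specializes to every base `b` modulo `∑ b^i`.
-/

open Finset

/-- The cyclotomic class `D_i` of order 4 modulo `p` with respect to the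
primitive root `θ`: `{θ^(i+4j) mod p : 0 ≤ j < (p-1)/4}`. -/
def cycD (p θ i : ℕ) : Finset ℕ :=
  (Finset.range ((p - 1) / 4)).image fun j => θ ^ (i + 4 * j) % p

/-- `η_i = Σ_{t ∈ D_i} 4^t` as an integer. -/
def eta4 (p θ : ℕ) (i : ℕ) : ℤ := ∑ t ∈ cycD p θ i, (4 : ℤ) ^ t

/-- `H = η₀ + η₂ − η₁ − η₃`. -/
def Hval (p θ : ℕ) : ℤ := eta4 p θ 0 + eta4 p θ 2 - eta4 p θ 1 - eta4 p θ 3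

open Complex (I)
open Polynomial
open scoped ComplexConjugate

theorem sum_inv_pow_mul_mulChar_pow {M K : Type*} [CommMonoid M] [Field K] [DecidableEq K] {n : ℕ}
    {χ : MulChar M K} (hχ : χ ^ n = 1) {z : K} (hz : z ^ n = 1) (a : M) :
    ∑ k ∈ range n, z⁻¹ ^ k * (χ ^ k) a = if χ a = z then (n : K) else 0 := by
  rcases eq_or_ne n 0 with rfl | hn
  · simp
  have hz0 : z ≠ 0 := by rintro rfl; simp [hn] at hz
  by_cases ha : IsUnit a
  · lift a to Mˣ using ha
    have hroot : (z⁻¹ * χ a) ^ n = 1 := by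
      rw [mul_pow, inv_pow, hz, ← MulChar.pow_apply_coe, hχ, MulChar.one_apply_coe, inv_one,
        one_mul]
    simp only [MulChar.pow_apply_coe, ← mul_pow]
    split_ifs with h
    · simp [h, hz0]
    · have hne : z⁻¹ * χ a ≠ 1 := fun h' => h (eq_of_inv_mul_eq_one h').symm
      rw [geom_sum_eq hne, hroot, sub_self, zero_div]
  · simp [MulChar.map_nonunit _ ha, hz0.symm]

theorem card_mul_sum_mulChar_fiber {M K : Type*} [CommMonoid M] [Fintype M] [Field K]
    [DecidableEq K] {n : ℕ} {χ : MulChar M K} (hχ : χ ^ n = 1) {z : K} (hz : z ^ n = 1)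
    (f : M → K) :
    n * ∑ a with χ a = z, f a = ∑ k ∈ range n, z⁻¹ ^ k * ∑ a, (χ ^ k) a * f a := by
  simp only [mul_sum]
  rw [sum_comm, sum_filter]
  refine sum_congr rfl fun a _ => ?_
  simp only [← mul_assoc, ← sum_mul, sum_inv_pow_mul_mulChar_pow hχ hz, ite_mul, zero_mul]

theorem card_mul_sum_mulChar_fiber_addChar {R K : Type*} [CommRing R] [Fintype R] [Field K]
    [DecidableEq K] {n : ℕ} {χ : MulChar R K} (hχ : χ ^ n = 1) {z : K} (hz : z ^ n = 1)
    (ψ : AddChar R K) :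
    n * ∑ a with χ a = z, ψ a = ∑ k ∈ range n, z⁻¹ ^ k * gaussSum (χ ^ k) ψ :=
  card_mul_sum_mulChar_fiber hχ hz ψ

theorem sum_mulChar_mul_mulChar_add_one {R S : Type*} [CommRing R] [Fintype R] [CommRing S]
    (χ φ : MulChar R S) :
    ∑ a, χ a * φ (a + 1) = χ (-1) * jacobiSum χ φ := by
  rw [jacobiSum, mul_sum, ← Equiv.sum_comp (Equiv.neg R)]
  refine sum_congr rfl fun a _ => ?_
  rw [Equiv.neg_apply, neg_eq_neg_one_mul, map_mul, mul_assoc, neg_one_mul, neg_add_eq_sub]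

theorem sq_mul_card_mulChar_fiber_inter_shift {R K : Type*} [CommRing R] [Fintype R] [Field K]
    [DecidableEq K] {n : ℕ} {χ : MulChar R K} (hχ : χ ^ n = 1) {z w : K} (hz : z ^ n = 1)
    (hw : w ^ n = 1) :
    (n : K) ^ 2 * #{a | χ a = z ∧ χ (a + 1) = w} =
      ∑ j ∈ range n, ∑ k ∈ range n,
        z⁻¹ ^ j * w⁻¹ ^ k * ((χ ^ j) (-1) * jacobiSum (χ ^ j) (χ ^ k)) := by
  calc (n : K) ^ 2 * #{a | χ a = z ∧ χ (a + 1) = w}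
      = n * ∑ a with χ a = z, if χ (a + 1) = w then (n : K) else 0 := by
        rw [← filter_filter, ← sum_filter, sum_const, nsmul_eq_mul]; ring
    _ = ∑ j ∈ range n, z⁻¹ ^ j * ∑ a, (χ ^ j) a * ∑ k ∈ range n, w⁻¹ ^ k * (χ ^ k) (a + 1) := by
        simp only [sum_inv_pow_mul_mulChar_pow hχ hw]
        exact card_mul_sum_mulChar_fiber hχ hz _
    _ = _ := by
        simp only [← sum_mulChar_mul_mulChar_add_one, mul_sum]
        refine sum_congr rfl fun j _ => ?_
        rw [sum_comm]
        refine sum_congr rfl fun k _ => sum_congr rfl fun a _ => ?_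
        ring

theorem conj_jacobiSum {R : Type*} [CommRing R] [Fintype R] (χ φ : MulChar R ℂ) :
    conj (jacobiSum χ φ) = jacobiSum χ⁻¹ φ⁻¹ := by
  simp only [jacobiSum, map_sum, map_mul, ← MulChar.star_apply', Complex.star_def]

theorem exists_gaussianInt_eq_jacobiSum {F : Type*} [Field F] [Fintype F] {χ φ : MulChar F ℂ}
    (hχ : χ ^ 4 = 1) (hφ : φ ^ 4 = 1) : ∃ π : GaussianInt, (π : ℂ) = jacobiSum χ φ := by
  have hI : Algebra.adjoin ℤ {I} ≤ GaussianInt.toComplex.toIntAlgHom.range :=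
    Algebra.adjoin_le (by
      rw [Set.singleton_subset_iff]
      exact ⟨⟨0, 1⟩, by simp [GaussianInt.toComplex_def]⟩)
  exact hI (jacobiSum_mem_algebraAdjoin_of_pow_eq_one hχ hφ Complex.isPrimitiveRoot_I)

theorem sq_inv_of_orderOf_eq_four {G : Type*} [Group G] {g : G} (hg : orderOf g = 4) :
    (g ^ 2)⁻¹ = g ^ 2 :=
  inv_eq_of_mul_eq_one_right (by rw [← pow_add, ← pow_orderOf_eq_one g, hg])

theorem pow_three_of_orderOf_eq_four {G : Type*} [Group G] {g : G} (hg : orderOf g = 4) :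
    g ^ 3 = g⁻¹ :=
  eq_inv_of_mul_eq_one_left (by rw [← pow_succ, ← pow_orderOf_eq_one g, hg])

theorem sq_ne_one_of_orderOf_eq_four {G : Type*} [Monoid G] {g : G} (hg : orderOf g = 4) :
    g ^ 2 ≠ 1 :=
  pow_ne_one_of_lt_orderOf two_ne_zero (by omega)

theorem ne_one_of_orderOf_eq_four {G : Type*} [Monoid G] {g : G} (hg : orderOf g = 4) : g ≠ 1 := by
  rintro rfl
  simp at hg

theorem mulChar_sq_neg_one {R S : Type*} [CommRing R] [CommRing S] (χ : MulChar R S) :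
    (χ ^ 2) (-1) = 1 := by
  rw [MulChar.pow_apply' _ two_ne_zero, ← map_pow, neg_one_sq, map_one]

theorem mulChar_inv_neg_one {R S : Type*} [CommRing R] [CommRing S] (χ : MulChar R S) :
    χ⁻¹ (-1) = χ (-1) := by
  rw [MulChar.inv_apply, ← Units.coe_neg_one, Ring.inverse_unit, inv_neg_one]

theorem gaussSum_mul_gaussSum_inv {F R : Type*} [Field F] [Fintype F] [CommRing R] [IsDomain R]
    {χ : MulChar F R} (hχ : χ ≠ 1) {ψ : AddChar F R} (hψ : ψ ≠ 1) :
    gaussSum χ ψ * gaussSum χ⁻¹ ψ = χ (-1) * Fintype.card F := by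
  rw [← gaussSum_mul_gaussSum_eq_card hχ (.of_ne_one hψ), ← mul_gaussSum_inv_eq_gaussSum χ⁻¹ ψ,
    mulChar_inv_neg_one, mul_left_comm]

section QuarticCharacter

variable {F : Type*} [Field F] [Fintype F] {χ : MulChar F ℂ}

theorem gaussSum_quarticChar_sq (hχ : orderOf χ = 4) (ψ : AddChar F ℂ) :
    gaussSum χ ψ ^ 2 = jacobiSum χ χ * gaussSum (χ ^ 2) ψ := by
  have h := jacobiSum_mul_nontrivial (sq χ ▸ sq_ne_one_of_orderOf_eq_four hχ) ψ
  rw [sq, ← h, ← sq, mul_comm]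

theorem gaussSum_sq_quarticChar (hχ : orderOf χ = 4) {ψ : AddChar F ℂ} (hψ : ψ ≠ 1) :
    gaussSum (χ ^ 2) ψ ^ 2 = Fintype.card F := by
  have h := gaussSum_mul_gaussSum_inv (sq_ne_one_of_orderOf_eq_four hχ) hψ
  rwa [sq_inv_of_orderOf_eq_four hχ, ← sq, mulChar_sq_neg_one, one_mul] at h

theorem gaussSum_quarticChar_inv_sq (hχ : orderOf χ = 4) (ψ : AddChar F ℂ) :
    gaussSum χ⁻¹ ψ ^ 2 = conj (jacobiSum χ χ) * gaussSum (χ ^ 2) ψ := by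
  have h := gaussSum_quarticChar_sq (χ := χ⁻¹) (by rwa [orderOf_inv]) ψ
  rwa [inv_pow, sq_inv_of_orderOf_eq_four hχ, ← conj_jacobiSum] at h

theorem jacobiSum_quarticChar_sq (hχ : orderOf χ = 4) :
    jacobiSum χ (χ ^ 2) = χ (-1) * jacobiSum χ χ := by
  obtain ⟨ψ, hψ⟩ : ∃ ψ : AddChar F ℂ, ψ ≠ 1 := ⟨_, by
    simpa only [AddChar.mulShift_one] using
      AddChar.FiniteField.primitiveChar_to_Complex_isPrimitive F one_ne_zero⟩
  have hq : (Fintype.card F : ℂ) ≠ 0 := Nat.cast_ne_zero.2 Fintype.card_ne_zero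
  have hneg : χ (-1) * χ (-1) = 1 := by rw [← map_mul, neg_one_mul, neg_neg, map_one]
  have hmul : χ * χ ^ 2 = χ⁻¹ := by rw [← pow_succ', pow_three_of_orderOf_eq_four hχ]
  have h11 := gaussSum_quarticChar_sq hχ ψ
  have h12 := jacobiSum_mul_nontrivial (χ := χ) (φ := χ ^ 2)
    (hmul ▸ inv_ne_one.2 (ne_one_of_orderOf_eq_four hχ)) ψ
  have h13 := gaussSum_mul_gaussSum_inv (ne_one_of_orderOf_eq_four hχ) hψ
  have h22 := gaussSum_sq_quarticChar hχ hψ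
  rw [hmul] at h12
  apply mul_left_cancel₀ hq
  linear_combination χ (-1) * (gaussSum χ ψ * h12 - jacobiSum χ (χ ^ 2) * h13
    + gaussSum (χ ^ 2) ψ * h11 + jacobiSum χ χ * h22)
    - Fintype.card F * jacobiSum χ (χ ^ 2) * hneg

theorem normSq_jacobiSum_quarticChar (hχ : orderOf χ = 4) :
    Complex.normSq (jacobiSum χ χ) = Fintype.card F := by
  have hχ1 := ne_one_of_orderOf_eq_four hχ
  have hchar : ringChar ℂ ≠ ringChar F := by
    rw [ringChar.eq_zero]; exact (CharP.ringChar_ne_zero_of_finite F).symm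
  have h := jacobiSum_mul_jacobiSum_inv hchar hχ1 hχ1 (sq χ ▸ sq_ne_one_of_orderOf_eq_four hχ)
  rw [← conj_jacobiSum, Complex.mul_conj] at h
  exact_mod_cast h

theorem jacobiSum_quarticChar_inv_sq (hχ : orderOf χ = 4) :
    jacobiSum χ⁻¹ (χ ^ 2) = χ (-1) * conj (jacobiSum χ χ) := by
  have h := jacobiSum_quarticChar_sq (χ := χ⁻¹) (by rwa [orderOf_inv])
  rwa [inv_pow, sq_inv_of_orderOf_eq_four hχ, ← conj_jacobiSum, mulChar_inv_neg_one] at h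

theorem sixteen_mul_card_quarticChar_eq_one_and_eq_I (hχ : orderOf χ = 4) (hneg : χ (-1) = -1) :
    (16 * #{a | χ a = 1 ∧ χ (a + 1) = I} : ℝ) =
      Fintype.card F + 1 - 2 * (jacobiSum χ χ).re - 4 * (jacobiSum χ χ).im := by
  have hχ1 := ne_one_of_orderOf_eq_four hχ
  have hχ2 := sq_ne_one_of_orderOf_eq_four hχ
  have hinv := inv_ne_one.2 hχ1
  have h22 : jacobiSum (χ ^ 2) (χ ^ 2) = -1 := by
    simpa only [sq_inv_of_orderOf_eq_four hχ, mulChar_sq_neg_one] using jacobiSum_nontrivial_inv hχ2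
  have hI2 : (-I) ^ 2 = -1 := by rw [neg_sq, Complex.I_sq]
  have hI3 : (-I) ^ 3 = I := by rw [Odd.neg_pow (by decide), Complex.I_pow_three, neg_neg]
  have hone : (1 : MulChar F ℂ) (-1) = 1 := MulChar.one_apply isUnit_one.neg
  have hcount := sq_mul_card_mulChar_fiber_inter_shift (hχ ▸ pow_orderOf_eq_one χ) (one_pow 4)
    Complex.I_pow_four
  simp only [sum_range_succ, sum_range_zero, pow_zero, pow_one, pow_three_of_orderOf_eq_four hχ,
    hone, hneg, mulChar_sq_neg_one, mulChar_inv_neg_one, jacobiSum_one_one,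
    jacobiSum_one_nontrivial, hχ1, hχ2, hinv, ne_eq, not_false_eq_true,
    jacobiSum_comm _ (1 : MulChar F ℂ), jacobiSum_comm (χ ^ 2) _, jacobiSum_comm χ⁻¹ χ,
    jacobiSum_nontrivial_inv hχ1, jacobiSum_quarticChar_sq hχ, jacobiSum_quarticChar_inv_sq hχ,
    h22, ← conj_jacobiSum, Complex.inv_I, hI2, hI3] at hcount
  have hadd := Complex.add_conj (jacobiSum χ χ)
  have hsub := Complex.sub_conj (jacobiSum χ χ)
  rw [← Complex.ofReal_inj]
  push_cast at hcount hadd hsub ⊢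
  linear_combination hcount - hadd + 2 * I * hsub + 4 * (jacobiSum χ χ).im * Complex.I_sq

/-- The Gaussian period `∑ ψ a` over the `a` with `χ a = I ^ i`; for `χ` of order four these `a`
form a coset of the fourth powers. -/
noncomputable def quarticPeriod (χ : MulChar F ℂ) (ψ : AddChar F ℂ) (i : ℕ) : ℂ :=
  ∑ a with χ a = I ^ i, ψ a

theorem four_mul_quarticPeriod (hχ : orderOf χ = 4) {ψ : AddChar F ℂ} (hψ : ψ ≠ 1) (i : ℕ) :
    4 * quarticPeriod χ ψ i =
      -1 + (-I) ^ i * gaussSum χ ψ + (-1) ^ i * gaussSum (χ ^ 2) ψ + I ^ i * gaussSum χ⁻¹ ψ := by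
  have hroot : (I ^ i) ^ 4 = 1 := by rw [pow_right_comm, Complex.I_pow_four, one_pow]
  have hinv : (I ^ i)⁻¹ = (-I) ^ i := by rw [← inv_pow, Complex.inv_I]
  have hsq : ((-I) ^ i) ^ 2 = (-1) ^ i := by rw [pow_right_comm, neg_sq, Complex.I_sq]
  have hcube : ((-I) ^ i) ^ 3 = I ^ i := by
    rw [pow_right_comm, Odd.neg_pow (by decide), Complex.I_pow_three, neg_neg]
  have h := card_mul_sum_mulChar_fiber_addChar (hχ ▸ pow_orderOf_eq_one χ) hroot ψ
  rw [quarticPeriod]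
  simpa only [sum_range_succ, sum_range_zero, zero_add, pow_zero, pow_one, one_mul,
    Nat.cast_ofNat, gaussSum_one_left hψ, pow_three_of_orderOf_eq_four hχ, hinv, hsq, hcube]
    using h

theorem sq_one_sub_I_mul_gaussSum_add (hχ : orderOf χ = 4) (hneg : χ (-1) = -1)
    {ψ : AddChar F ℂ} (hψ : ψ ≠ 1) :
    ((1 - I) * gaussSum χ ψ + (1 + I) * gaussSum χ⁻¹ ψ) ^ 2 =
      4 * (jacobiSum χ χ).im * gaussSum (χ ^ 2) ψ - 4 * Fintype.card F := by
  have hsq := gaussSum_quarticChar_sq hχ ψ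
  have hsq_inv := gaussSum_quarticChar_inv_sq hχ ψ
  have hmul := gaussSum_mul_gaussSum_inv (ne_one_of_orderOf_eq_four hχ) hψ
  have him := Complex.sub_conj (jacobiSum χ χ)
  rw [hneg] at hmul
  push_cast at him
  linear_combination -2 * I * hsq + 2 * I * hsq_inv + 4 * hmul - 2 * I * gaussSum (χ ^ 2) ψ * him
    + ((gaussSum χ ψ - gaussSum χ⁻¹ ψ) ^ 2 - 4 * (jacobiSum χ χ).im * gaussSum (χ ^ 2) ψ)
      * Complex.I_sq

theorem quarticPeriod_identity (hχ : orderOf χ = 4) (hneg : χ (-1) = -1) {ψ : AddChar F ℂ}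
    (hψ : ψ ≠ 1) :
    4 * (1 + quarticPeriod χ ψ 2 + 2 * quarticPeriod χ ψ 1 + 3 * quarticPeriod χ ψ 0)
        * (1 + quarticPeriod χ ψ 0 + 2 * quarticPeriod χ ψ 3 + 3 * quarticPeriod χ ψ 2) =
      -2 * (1 + 2 * (jacobiSum χ χ).im)
          * (quarticPeriod χ ψ 0 + quarticPeriod χ ψ 2 - quarticPeriod χ ψ 1 - quarticPeriod χ ψ 3)
        + 5 * Fintype.card F + 1 := by
  have hperiod := four_mul_quarticPeriod hχ hψ
  have hs := gaussSum_sq_quarticChar hχ hψ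
  have hT := sq_one_sub_I_mul_gaussSum_add hχ hneg hψ
  set e := quarticPeriod χ ψ
  set g := gaussSum χ ψ
  set s := gaussSum (χ ^ 2) ψ
  set g' := gaussSum χ⁻¹ ψ
  set T := (1 - I) * g + (1 + I) * g'
  have h0 : 4 * e 0 = -1 + g + s + g' := by linear_combination hperiod 0
  have h1 : 4 * e 1 = -1 - I * g - s + I * g' := by linear_combination hperiod 1
  have h2 : 4 * e 2 = -1 - g + s - g' := by
    linear_combination hperiod 2 + (g + g') * Complex.I_sq
  have h3 : 4 * e 3 = -1 + I * g - s - I * g' := by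
    linear_combination hperiod 3 - I * (g - g') * Complex.I_sq
  have hfst : 2 * (1 + e 2 + 2 * e 1 + 3 * e 0) = s - 1 + T := by
    linear_combination (h2 + 2 * h1 + 3 * h0) / 2
  have hsnd : 2 * (1 + e 0 + 2 * e 3 + 3 * e 2) = s - 1 - T := by
    linear_combination (h0 + 2 * h3 + 3 * h2) / 2
  have hH : e 0 + e 2 - e 1 - e 3 = s := by linear_combination (h0 + h2 - h1 - h3) / 4
  calc 4 * (1 + e 2 + 2 * e 1 + 3 * e 0) * (1 + e 0 + 2 * e 3 + 3 * e 2)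
      = 2 * (1 + e 2 + 2 * e 1 + 3 * e 0) * (2 * (1 + e 0 + 2 * e 3 + 3 * e 2)) := by ring
    _ = s ^ 2 - 2 * s + 1 - T ^ 2 := by rw [hfst, hsnd]; ring
    _ = _ := by rw [hs, hT, hH]; ring

end QuarticCharacter

theorem exists_mulChar_apply_primitiveRoot_eq {F R : Type*} [Field F] [Fintype F] [CommRing R]
    {θ : F} (hθ : IsPrimitiveRoot θ (Fintype.card F - 1)) {μ : R}
    (hμ : μ ^ (Fintype.card F - 1) = 1) :
    ∃ χ : MulChar F R, χ θ = μ ∧ orderOf χ = orderOf μ := by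
  classical
  have hq : Fintype.card F - 1 ≠ 0 := (Nat.sub_pos_of_lt Fintype.one_lt_card).ne'
  obtain ⟨θ, rfl⟩ := hθ.isUnit hq
  obtain ⟨μ, rfl⟩ := IsUnit.of_pow_eq_one hμ hq
  have hcard : Nat.card Fˣ = Fintype.card F - 1 := by
    rw [Nat.card_eq_fintype_card, Fintype.card_units]
  have hgen (u : Fˣ) : u ∈ Subgroup.zpowers θ := by
    rw [Subgroup.eq_top_of_card_eq (Subgroup.zpowers θ) (by
      rw [Nat.card_zpowers, hcard, (IsPrimitiveRoot.coe_units_iff.1 hθ).eq_orderOf])]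
    exact Subgroup.mem_top u
  have hroot : μ ∈ rootsOfUnity (Fintype.card Fˣ) R := by
    rw [mem_rootsOfUnity', Fintype.card_units, hμ]
  have hspec := MulChar.ofRootOfUnity_spec hroot hgen
  refine ⟨.ofRootOfUnity hroot hgen, hspec, orderOf_eq_orderOf_iff.2 fun n => ?_⟩
  rw [MulChar.eq_iff hgen, MulChar.pow_apply_coe, hspec, MulChar.one_apply_coe]

theorem exists_quarticChar_apply_eq_I {p : ℕ} [Fact p.Prime] (hp8 : p % 8 = 5) {θ : ZMod p}
    (hθ : IsPrimitiveRoot θ (p - 1)) :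
    ∃ χ : MulChar (ZMod p) ℂ, χ θ = I ∧ orderOf χ = 4 ∧ χ (-1) = -1 := by
  obtain ⟨χ, hχθ, hχ⟩ := exists_mulChar_apply_primitiveRoot_eq (θ := θ) (μ := I)
    (by rwa [ZMod.card])
    (by rw [ZMod.card, show p - 1 = 4 * (p / 4) by omega, pow_mul, Complex.I_pow_four, one_pow])
  have hhalf : θ ^ ((p - 1) / 2) = -1 :=
    (hθ.pow (b := 2) (by omega) (by omega)).eq_neg_one_of_two_right
  refine ⟨χ, hχθ, hχ.trans Complex.isPrimitiveRoot_I.eq_orderOf.symm, ?_⟩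
  rw [← hhalf, map_pow, hχθ, show (p - 1) / 2 = 4 * (p / 8) + 2 by omega, pow_add, pow_mul,
    Complex.I_pow_four, one_pow, one_mul, Complex.I_sq]

theorem eq_two_mul_of_sq_add_sq_eq_prime {p : ℕ} (hp : p.Prime) {a b x y : ℤ}
    (hab : a ^ 2 + b ^ 2 = p) (hxy : x ^ 2 + 4 * y ^ 2 = p) (h : a + 2 * b = x + 4 * y) :
    b = 2 * y := by
  obtain rfl : a = x + 4 * y - 2 * b := by linarith
  have hmul : (b - 2 * y) * (5 * b - 6 * y - 4 * x) = 0 := by linear_combination hab - hxy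
  refine (mul_eq_zero.1 hmul).elim sub_eq_zero.1 fun h5 => ?_
  -- On the other root `x ≡ y` mod `5`, so `5 ∣ x ^ 2 + 4 * y ^ 2` and `p = 5` remains.
  obtain ⟨k, hk⟩ : ∃ k, x = y + 5 * k := ⟨(x - y) / 5, by omega⟩
  have h5p : (5 : ℤ) ∣ p := ⟨y ^ 2 + 2 * y * k + 5 * k ^ 2, by rw [← hxy, hk]; ring⟩
  obtain rfl : 5 = p := (Nat.prime_dvd_prime_iff_eq Nat.prime_five hp).1 (by exact_mod_cast h5p)
  rw [Nat.cast_ofNat] at hxy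
  obtain ⟨_, _⟩ : -3 < x ∧ x < 3 := abs_lt_of_sq_lt_sq' (by linarith [sq_nonneg y]) (by norm_num)
  obtain ⟨_, _⟩ : -2 < y ∧ y < 2 := abs_lt_of_sq_lt_sq' (by linarith [sq_nonneg x]) (by norm_num)
  interval_cases x <;> interval_cases y <;> omega

theorem geom_sum_dvd_aeval_sub_aeval {p : ℕ} (hp : p.Prime) {K : Type*} [Field K] [CharZero K]
    {ζ : K} (hζ : IsPrimitiveRoot ζ p) {f g : ℤ[X]} (hfg : aeval ζ f = aeval ζ g) {R : Type*}
    [CommRing R] (b : R) : ∑ i ∈ range p, b ^ i ∣ aeval b f - aeval b g := by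
  have : Fact p.Prime := ⟨hp⟩
  have hdvd : cyclotomic p ℤ ∣ f - g := by
    rw [cyclotomic_eq_minpoly hζ hp.pos]
    exact minpoly.isIntegrallyClosed_dvd (hζ.isIntegral hp.pos) (by rw [map_sub, hfg, sub_self])
  simpa only [cyclotomic_prime, map_sum, map_pow, map_sub, aeval_X] using map_dvd (aeval b) hdvd

theorem exists_lt_pow_add_mul_eq_pow {M : Type*} [Monoid M] {a : M} {k n : ℕ} (hk : 0 < k)
    (hn : 0 < n) (ha : a ^ (k * n) = 1) {i m : ℕ} (him : i ≡ m [MOD k]) :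
    ∃ j < n, a ^ (i + k * j) = a ^ m := by
  obtain ⟨j, hj⟩ : ∃ j, i + k * j = m + k * n * i := by
    have hle : i ≤ m + k * n * i :=
      (Nat.le_mul_of_pos_left i (Nat.mul_pos hk hn)).trans (Nat.le_add_left ..)
    have hmod : i ≡ m + k * n * i [MOD k] :=
      him.trans (by rw [mul_assoc]; exact (Nat.add_mul_mod_self_left ..).symm)
    obtain ⟨j, hj⟩ := (Nat.modEq_iff_dvd' hle).1 hmod
    exact ⟨j, by omega⟩
  refine ⟨j % n, Nat.mod_lt _ hn, ?_⟩
  calc a ^ (i + k * (j % n)) = a ^ (i + k * j) :=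
        pow_eq_pow_of_modEq (((Nat.mod_modEq j n).mul_left' k).add_left i) ha
    _ = a ^ m := by rw [hj, pow_add, pow_mul, ha, one_pow, mul_one]

section CyclotomicClass

/-- The sum `∑_{t ∈ D_i} b ^ t`. It is `eta4` for `b = 4`, and the `i`-th Gaussian period of order
four when `b` is a primitive `p`-th root of unity. -/
def cycEta {R : Type*} [Semiring R] (b : R) (p θ i : ℕ) : R := ∑ t ∈ cycD p θ i, b ^ t

theorem map_cycEta {R S A : Type*} [Semiring R] [Semiring S] [FunLike A R S] [RingHomClass A R S]
    (f : A) (b : R) (p θ i : ℕ) : f (cycEta b p θ i) = cycEta (f b) p θ i := by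
  simp only [cycEta, map_sum, map_pow]

variable {p : ℕ} [Fact p.Prime] {θ : ℕ} {χ : MulChar (ZMod p) ℂ}

theorem mem_cycD_iff (hp4 : p % 4 = 1) (hθ : IsPrimitiveRoot (θ : ZMod p) (p - 1))
    (hχθ : χ θ = I) {i t : ℕ} : t ∈ cycD p θ i ↔ t < p ∧ χ t = I ^ i := by
  have hp : 1 < p := (Fact.out : p.Prime).one_lt
  simp only [cycD, mem_image, mem_range]
  constructor
  · rintro ⟨j, -, rfl⟩
    refine ⟨Nat.mod_lt _ (by omega), ?_⟩
    rw [ZMod.natCast_mod, Nat.cast_pow, map_pow, hχθ, pow_add, pow_mul, Complex.I_pow_four,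
      one_pow, mul_one]
  · rintro ⟨htp, ht⟩
    have ht0 : (t : ZMod p) ≠ 0 := by
      intro h
      rw [h, MulChar.map_zero] at ht
      exact pow_ne_zero i Complex.I_ne_zero ht.symm
    have : NeZero (p - 1) := ⟨by omega⟩
    obtain ⟨m, -, hm⟩ := hθ.eq_pow_of_pow_eq_one (ZMod.pow_card_sub_one_eq_one ht0)
    rw [← hm, map_pow, hχθ] at ht
    have him : i ≡ m [MOD 4] := by
      rw [Complex.isPrimitiveRoot_I.eq_orderOf]
      refine (IsOfFinOrder.pow_eq_pow_iff_modEq ?_).1 ht.symm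
      exact isOfFinOrder_iff_pow_eq_one.2 ⟨4, by norm_num, Complex.I_pow_four⟩
    have hθ1 : (θ : ZMod p) ^ (4 * ((p - 1) / 4)) = 1 := by
      rw [Nat.mul_div_cancel' (by omega), hθ.pow_eq_one]
    obtain ⟨j, hj, hpow⟩ := exists_lt_pow_add_mul_eq_pow four_pos (by omega) hθ1 him
    refine ⟨j, hj, ?_⟩
    rw [← Nat.mod_eq_of_lt htp]
    exact (ZMod.natCast_eq_natCast_iff' ..).1 (by rw [Nat.cast_pow, hpow, hm])

theorem sum_cycD (hp4 : p % 4 = 1) (hθ : IsPrimitiveRoot (θ : ZMod p) (p - 1)) (hχθ : χ θ = I)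
    {M : Type*} [AddCommMonoid M] (f : ZMod p → M) (i : ℕ) :
    ∑ t ∈ cycD p θ i, f t = ∑ a with χ a = I ^ i, f a := by
  refine sum_nbij' (fun t => (t : ZMod p)) ZMod.val ?_ ?_ ?_ ?_ ?_
  all_goals
    simp +contextual [mem_cycD_iff hp4 hθ hχθ, ZMod.val_lt, ZMod.val_natCast, Nat.mod_eq_of_lt]

theorem card_cycD_zero_inter_shift (hp4 : p % 4 = 1) (hθ : IsPrimitiveRoot (θ : ZMod p) (p - 1))
    (hχθ : χ θ = I) :
    #{a ∈ cycD p θ 0 | (a + 1) % p ∈ cycD p θ 1} = #{a | χ a = 1 ∧ χ (a + 1) = I} := by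
  have hmod (a : ℕ) : (a + 1) % p < p := Nat.mod_lt _ (Fact.out : p.Prime).pos
  have h := sum_cycD hp4 hθ hχθ (fun a => if χ (a + 1) = I then 1 else 0) 0
  simp only [card_filter, mem_cycD_iff hp4 hθ hχθ (i := 1), hmod, true_and, ZMod.natCast_mod,
    Nat.cast_add, Nat.cast_one, pow_one] at h ⊢
  rw [h, pow_zero, sum_filter]
  simp only [ite_and]

theorem cycEta_eq_quarticPeriod (hp4 : p % 4 = 1) (hθ : IsPrimitiveRoot (θ : ZMod p) (p - 1))
    (hχθ : χ θ = I) {ζ : ℂ} (hζ : ζ ^ p = 1) (i : ℕ) :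
    cycEta ζ p θ i = quarticPeriod χ (AddChar.zmodChar p hζ) i := by
  rw [quarticPeriod, ← sum_cycD hp4 hθ hχθ]
  simp only [cycEta, AddChar.zmodChar_apply']

theorem jacobiSum_im_eq_two_mul (hp4 : p % 4 = 1) (hθ : IsPrimitiveRoot (θ : ZMod p) (p - 1))
    (hχθ : χ θ = I) (hχ : orderOf χ = 4) (hneg : χ (-1) = -1) {x y : ℤ}
    (hxy : (p : ℤ) = x ^ 2 + 4 * y ^ 2)
    (hy : 16 * (#{a ∈ cycD p θ 0 | (a + 1) % p ∈ cycD p θ 1} : ℤ) = p + 1 + 2 * x - 8 * y) :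
    (jacobiSum χ χ).im = 2 * y := by
  have hχ4 : χ ^ 4 = 1 := hχ ▸ pow_orderOf_eq_one χ
  obtain ⟨π, hπ⟩ := exists_gaussianInt_eq_jacobiSum hχ4 hχ4
  have hnorm := normSq_jacobiSum_quarticChar hχ
  have hcount := sixteen_mul_card_quarticChar_eq_one_and_eq_I hχ hneg
  rw [← card_cycD_zero_inter_shift hp4 hθ hχθ] at hcount
  rw [← hπ, Complex.normSq_apply, ZMod.card, ← GaussianInt.intCast_re,
    ← GaussianInt.intCast_im] at hnorm
  rw [← hπ, ZMod.card, ← GaussianInt.intCast_re, ← GaussianInt.intCast_im] at hcount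
  rw [← hπ, ← GaussianInt.intCast_im]
  norm_cast at hnorm hcount ⊢
  push_cast at hcount
  refine eq_two_mul_of_sq_add_sq_eq_prime (Fact.out : p.Prime) (a := π.re) (x := -x) ?_ ?_ ?_
  all_goals linarith

theorem cycEta_identity_of_isPrimitiveRoot (hp8 : p % 8 = 5)
    (hθ : IsPrimitiveRoot (θ : ZMod p) (p - 1)) {x y : ℤ} (hxy : (p : ℤ) = x ^ 2 + 4 * y ^ 2)
    (hy : 16 * (#{a ∈ cycD p θ 0 | (a + 1) % p ∈ cycD p θ 1} : ℤ) = p + 1 + 2 * x - 8 * y)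
    {ζ : ℂ} (hζ : IsPrimitiveRoot ζ p) :
    4 * (1 + cycEta ζ p θ 2 + 2 * cycEta ζ p θ 1 + 3 * cycEta ζ p θ 0)
        * (1 + cycEta ζ p θ 0 + 2 * cycEta ζ p θ 3 + 3 * cycEta ζ p θ 2) =
      -2 * (1 + 4 * y) * (cycEta ζ p θ 0 + cycEta ζ p θ 2 - cycEta ζ p θ 1 - cycEta ζ p θ 3)
        + 5 * p + 1 := by
  obtain ⟨χ, hχθ, hχ, hneg⟩ := exists_quarticChar_apply_eq_I hp8 hθ
  have hp4 : p % 4 = 1 := by omega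
  have him := jacobiSum_im_eq_two_mul hp4 hθ hχθ hχ hneg hxy hy
  have hψ : AddChar.zmodChar p hζ.pow_eq_one ≠ 1 := by
    rw [AddChar.zmod_char_ne_one_iff, ← Nat.cast_one, AddChar.zmodChar_apply', pow_one]
    exact hζ.ne_one (Fact.out : p.Prime).one_lt
  have h := quarticPeriod_identity hχ hneg hψ
  simp only [← cycEta_eq_quarticPeriod hp4 hθ hχθ hζ.pow_eq_one, him, ZMod.card] at h
  push_cast at h
  linear_combination h

end CyclotomicClass

theorem int_geom_sum_eq_ediv {b : ℤ} (hb : b ≠ 1) (n : ℕ) :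
    ∑ i ∈ range n, b ^ i = (b ^ n - 1) / (b - 1) :=
  Int.eq_ediv_of_mul_eq_left (sub_ne_zero.2 hb) (geom_sum_mul b n)

theorem lemma5_part2_general (p : ℕ) (hp : p.Prime) (hp8 : p % 8 = 5)
    (x y : ℤ) (hxy : (p : ℤ) = x ^ 2 + 4 * y ^ 2)
    (θ : ℕ) (hθ : IsPrimitiveRoot (θ : ZMod p) (p - 1))
    (hy : 16 * (#{a ∈ cycD p θ 0 | (a + 1) % p ∈ cycD p θ 1} : ℤ) = p + 1 + 2 * x - 8 * y)
    {R : Type*} [CommRing R] (b : R) :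
    ∑ i ∈ range p, b ^ i ∣
      -2 * (1 + 4 * y) * (cycEta b p θ 0 + cycEta b p θ 2 - cycEta b p θ 1 - cycEta b p θ 3)
          + 5 * p + 1
        - 4 * (1 + cycEta b p θ 2 + 2 * cycEta b p θ 1 + 3 * cycEta b p θ 0)
          * (1 + cycEta b p θ 0 + 2 * cycEta b p θ 3 + 3 * cycEta b p θ 2) := by
  have : Fact p.Prime := ⟨hp⟩
  have hζ := Complex.isPrimitiveRoot_exp p hp.ne_zero
  have hid := cycEta_identity_of_isPrimitiveRoot hp8 hθ hxy hy hζ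
  let η (i : ℕ) : ℤ[X] := cycEta X p θ i
  let f : ℤ[X] := -2 * (1 + 4 * C y) * (η 0 + η 2 - η 1 - η 3) + 5 * p + 1
  let g : ℤ[X] := 4 * (1 + η 2 + 2 * η 1 + 3 * η 0) * (1 + η 0 + 2 * η 3 + 3 * η 2)
  have h := geom_sum_dvd_aeval_sub_aeval hp hζ (f := f) (g := g)
    (by simpa [f, g, η, map_cycEta, map_ofNat] using hid.symm) b
  simpa [f, g, η, map_cycEta, map_ofNat] using h

theorem lemma5_part2
    (p : ℕ) (hp : p.Prime) (hp8 : p % 8 = 5)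
    (x y : ℤ) (hx : x % 4 = 1) (hxy : (p : ℤ) = x ^ 2 + 4 * y ^ 2)
    (θ : ℕ) (hθ : IsPrimitiveRoot (θ : ZMod p) (p - 1))
    (hy : 16 * (((cycD p θ 0).filter (fun a => (a + 1) % p ∈ cycD p θ 1)).card : ℤ)
        = (p : ℤ) + 1 + 2 * x - 8 * y)
    :
    4 * (1 + eta4 p θ 2 + 2 * eta4 p θ 1 + 3 * eta4 p θ 0) * (1 + eta4 p θ 0 + 2 * eta4 p θ 3 + 3 * eta4 p θ 2)
      ≡ -2 * (1 + 4 * y) * Hval p θ + 5 * (p : ℤ) + 1 [ZMOD ((4 : ℤ) ^ p - 1) / 3] := by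
  have hmod : ∑ i ∈ range p, (4 : ℤ) ^ i = (4 ^ p - 1) / 3 := int_geom_sum_eq_ediv (by norm_num) p
  exact Int.modEq_iff_dvd.2 (hmod ▸ lemma5_part2_general p hp hp8 x y hxy θ hθ hy 4)
end

section
/- Part (4) of Lemma 5: 4·(η₂ + 2η₃ + 3η₀)·(η₀ + 2η₁ + 3η₂) ≡ −2(3−4y)·H + 5p + 9 (mod (4^p − 1)/3). -/
open Finset

/-!
Let `χ` be the quartic character modulo `p` with `χ θ = i`, and let `ζ` be a primitive `p`-th root
of unity. The sums `∑ t ∈ D_i, ζ ^ t` are the Gaussian periods of order four, that is, linear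
combinations of the Gauss sums `G (χ ^ k)`, and these are governed by
`G (χ) ^ 2 = J (χ, χ) * G (χ ^ 2)`. The Jacobi sum `J (χ, χ)` is a Gaussian integer of norm `p`, so
by uniqueness of the representation `p = x² + 4y²` it is known up to signs, and the value of the
cyclotomic number `(0, 1)` forces its imaginary part to be `2y`. Hence the periods satisfy
`∑ η_i = -1`, `H² = p`, `(η₀ - η₂)² + (η₁ - η₃)² = -p` and `(η₀ - η₂)(η₁ - η₃) = yH`,
and these four relations give the claim with `ζ` in place of `4`. This is a polynomial identity in
`ζ` over `ℤ`, so it holds modulo the minimal polynomial `1 + X + ⋯ + X ^ (p - 1)` of `ζ`, and one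
may substitute `X = 4`.
-/

section MultiplicativeCharacters

variable {F R : Type*} [Field F] [Fintype F] [CommRing R]

lemma exists_mulChar_apply_eq_and_orderOf_eq {θ : F}
    (hθ : IsPrimitiveRoot θ (Fintype.card F - 1)) {n : ℕ} (hn : n ∣ Fintype.card F - 1) {ζ : R}
    (hζ : IsPrimitiveRoot ζ n) : ∃ χ : MulChar F R, χ θ = ζ ∧ orderOf χ = n := by
  classical
  have hcard : Fintype.card F - 1 ≠ 0 := (Nat.sub_pos_of_lt Fintype.one_lt_card).ne'
  have hn₀ : n ≠ 0 := ne_zero_of_dvd_ne_zero hcard hn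
  obtain ⟨g, rfl⟩ := hθ.isUnit hcard
  obtain ⟨u, rfl⟩ := hζ.isUnit hn₀
  have hg : ∀ a, a ∈ Subgroup.zpowers g := by
    have : NeZero (Fintype.card F - 1) := ⟨hcard⟩
    intro a
    rw [(IsPrimitiveRoot.coe_units_iff.mp hθ).zpowers_eq, mem_rootsOfUnity,
      ← Fintype.card_units, pow_card_eq_one]
  have hu : u ∈ rootsOfUnity (Fintype.card Fˣ) R := by
    rw [Fintype.card_units, mem_rootsOfUnity, ← Units.val_eq_one, Units.val_pow_eq_pow_val]
    exact (hζ.pow_eq_one_iff_dvd _).mpr hn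
  refine ⟨MulChar.ofRootOfUnity hu hg, MulChar.ofRootOfUnity_spec hu hg, ?_⟩
  rw [hζ.eq_orderOf, orderOf_eq_orderOf_iff]
  intro m
  rw [MulChar.eq_iff hg, MulChar.pow_apply_coe, MulChar.ofRootOfUnity_spec,
    MulChar.one_apply_coe]

lemma apply_neg_one_of_card_mod_eight_eq_five (hF : Fintype.card F % 8 = 5) {θ : F}
    (hθ : IsPrimitiveRoot θ (Fintype.card F - 1)) {χ : MulChar F R} (hχ : χ θ ^ 2 = -1) :
    χ (-1) = -1 := by
  have hhalf : θ ^ ((Fintype.card F - 1) / 2) = -1 :=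
    (hθ.pow (by omega) (by omega)).eq_neg_one_of_two_right
  have hodd : Odd ((Fintype.card F - 1) / 4) := by rw [Nat.odd_iff]; omega
  rw [← hhalf, map_pow, show (Fintype.card F - 1) / 2 = 2 * ((Fintype.card F - 1) / 4) by omega,
    pow_mul, hχ, hodd.neg_one_pow]

lemma jacobiSum_eq_apply_neg_one_mul (χ φ : MulChar F R) :
    jacobiSum χ φ = χ (-1) * jacobiSum χ (χ * φ)⁻¹ := by
  classical
  rw [jacobiSum_eq_sum_sdiff, jacobiSum_eq_sum_sdiff, mul_sum]
  have hne {a : F} (ha : a ∈ (univ \ {0, 1} : Finset F)) : a ≠ 0 ∧ a - 1 ≠ 0 := by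
    simpa [sub_eq_zero] using ha
  have hmem : ∀ a ∈ (univ \ {0, 1} : Finset F), a / (a - 1) ∈ (univ \ {0, 1} : Finset F) := by
    intro a ha
    obtain ⟨h0, h1⟩ := hne ha
    simp [h0, h1, div_eq_one_iff_eq, eq_sub_iff_add_eq]
  have hinvol : ∀ a ∈ (univ \ {0, 1} : Finset F), a / (a - 1) / (a / (a - 1) - 1) = a := by
    intro a ha
    obtain ⟨h0, h1⟩ := hne ha
    field_simp
    ring
  refine sum_nbij' (fun a ↦ a / (a - 1)) (fun a ↦ a / (a - 1)) hmem hmem hinvol hinvol ?_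
  intro a ha
  obtain ⟨h0, h1⟩ := hne ha
  have h1' : 1 - a / (a - 1) = -1 * (a - 1)⁻¹ := by field_simp; ring
  have h2 : (1 - a / (a - 1))⁻¹ = 1 - a := by rw [h1']; field_simp; ring
  rw [MulChar.inv_apply', h2, MulChar.mul_apply, ← mul_assoc, ← mul_assoc, ← map_mul, ← map_mul]
  congr 2
  field_simp
  ring

end MultiplicativeCharacters

lemma jacobiSum_inv_inv {A : Type*} [CommRing A] [Fintype A] (χ φ : MulChar A ℂ) :
    jacobiSum χ⁻¹ φ⁻¹ = starRingEnd ℂ (jacobiSum χ φ) := by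
  simp only [jacobiSum, map_sum, map_mul, ← MulChar.star_apply', RCLike.star_def]

section LevelSets

variable {F K : Type*} [Field F] [Field K] [DecidableEq K]

lemma sum_inv_pow_mul_pow_apply_eq_ite {χ : MulChar F K} {n : ℕ} (hn : n ≠ 0) (hχ : χ ^ n = 1)
    {c : K} (hc : c ^ n = 1) (a : F) :
    ∑ k ∈ range n, c⁻¹ ^ k * (χ ^ k) a = if χ a = c then (n : K) else 0 := by
  have hc₀ : c ≠ 0 := by rintro rfl; simp [hn] at hc
  rcases eq_or_ne a 0 with rfl | ha
  · simp only [MulChar.map_zero, mul_zero, sum_const_zero, hc₀.symm, if_false]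
  have hpow (k : ℕ) : (χ ^ k) a = χ a ^ k := by
    simpa using χ.pow_apply_coe k (Units.mk0 a ha)
  simp only [hpow, ← mul_pow]
  split_ifs with h
  · simp [h, hc₀]
  · have hχa : χ a ^ n = 1 := by rw [← hpow, hχ, MulChar.one_apply ha.isUnit]
    have hne : c⁻¹ * χ a - 1 ≠ 0 := by
      rwa [sub_ne_zero, ne_eq, inv_mul_eq_one₀ hc₀, eq_comm]
    apply (mul_eq_zero_iff_right hne).mp
    rw [geom_sum_mul, mul_pow, inv_pow, hc, hχa, inv_one, mul_one, sub_self]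

variable [Fintype F]

/-- The Gaussian period of the level set `{χ = c}` of a multiplicative character, with respect to
the additive character `ψ`. When `χ` has order `n` and `c` runs over the `n`-th roots of unity,
the level sets are the cyclotomic classes of order `n`. -/
def gaussPeriod (χ : MulChar F K) (ψ : AddChar F K) (c : K) : K := ∑ a with χ a = c, ψ a

lemma natCast_mul_gaussPeriod {χ : MulChar F K} {n : ℕ} (hn : n ≠ 0) (hχ : χ ^ n = 1)
    (ψ : AddChar F K) {c : K} (hc : c ^ n = 1) :
    n * gaussPeriod χ ψ c = ∑ k ∈ range n, c⁻¹ ^ k * gaussSum (χ ^ k) ψ := by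
  simp only [gaussPeriod, gaussSum, mul_sum, sum_filter, mul_ite, mul_zero]
  rw [sum_comm]
  refine sum_congr rfl fun a _ ↦ ?_
  simp only [← mul_assoc, ← sum_mul, sum_inv_pow_mul_pow_apply_eq_ite hn hχ hc, ite_mul, zero_mul]

/-- The cyclotomic number of the level sets `{χ = c}` and `{χ = d}`: if `D_i` is the class
`{χ = ζ ^ i}`, then `cyclotomicNumber χ (ζ ^ i) (ζ ^ j)` is the classical `(i, j)`. -/
def cyclotomicNumber (χ : MulChar F K) (c d : K) : ℕ := #{a | χ a = c ∧ χ (a + 1) = d}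

lemma sq_mul_cyclotomicNumber {χ : MulChar F K} {n : ℕ} (hn : n ≠ 0) (hχ : χ ^ n = 1)
    {c d : K} (hc : c ^ n = 1) (hd : d ^ n = 1) :
    (n : K) ^ 2 * cyclotomicNumber χ c d =
      ∑ k ∈ range n, ∑ l ∈ range n,
        c⁻¹ ^ k * d⁻¹ ^ l * ((χ ^ k) (-1) * jacobiSum (χ ^ k) (χ ^ l)) := by
  have hind (a : F) : (if χ a = c ∧ χ (a + 1) = d then (n : K) ^ 2 else 0) =
      (∑ k ∈ range n, c⁻¹ ^ k * (χ ^ k) a) * ∑ l ∈ range n, d⁻¹ ^ l * (χ ^ l) (a + 1) := by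
    rw [sum_inv_pow_mul_pow_apply_eq_ite hn hχ hc, sum_inv_pow_mul_pow_apply_eq_ite hn hχ hd,
      ite_zero_mul_ite_zero, sq]
  have hneg (φ φ' : MulChar F K) : ∑ a, φ a * φ' (a + 1) = φ (-1) * jacobiSum φ φ' := by
    rw [jacobiSum, mul_sum, ← Equiv.sum_comp (Equiv.neg F) (fun a ↦ φ a * φ' (a + 1))]
    refine sum_congr rfl fun a _ ↦ ?_
    rw [Equiv.neg_apply, ← mul_assoc, ← map_mul, neg_one_mul, neg_add_eq_sub]
  calc (n : K) ^ 2 * cyclotomicNumber χ c d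
      = ∑ a, if χ a = c ∧ χ (a + 1) = d then (n : K) ^ 2 else 0 := by
        rw [← sum_filter, sum_const, nsmul_eq_mul, cyclotomicNumber, mul_comm]
    _ = ∑ k ∈ range n, ∑ l ∈ range n,
          c⁻¹ ^ k * d⁻¹ ^ l * ∑ a, (χ ^ k) a * (χ ^ l) (a + 1) := by
        simp only [hind, sum_mul_sum]
        rw [sum_comm]
        refine sum_congr rfl fun k _ ↦ ?_
        rw [sum_comm]
        simp only [mul_sum, mul_mul_mul_comm]
    _ = _ := by simp only [hneg]

end LevelSets

lemma sq_eq_sq_of_prime_eq_sq_add_mul_sq {p n x y s t : ℤ} (hp : Prime p) (hn : 1 < n)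
    (hxy : p = x ^ 2 + n * y ^ 2) (hst : p = s ^ 2 + n * t ^ 2) : x ^ 2 = s ^ 2 := by
  have sq_eq_of_dvd : ∀ s, p = s ^ 2 + n * t ^ 2 → p ∣ x * t - s * y → x ^ 2 = s ^ 2 := by
    rintro s hst ⟨k, hk⟩
    have hnorm : (x * s + n * y * t) ^ 2 + n * (x * t - s * y) ^ 2 = p ^ 2 := by
      linear_combination -p * hxy - (x ^ 2 + n * y ^ 2) * hst
    have hle : p ^ 2 * (n * k ^ 2) ≤ p ^ 2 * 1 := by
      rw [hk] at hnorm
      linarith [sq_nonneg (x * s + n * y * t)]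
    have hnk : n * k ^ 2 ≤ 1 := le_of_mul_le_mul_left hle (sq_pos_of_ne_zero hp.ne_zero)
    have hk₀ : k = 0 := by
      by_contra hk₀
      nlinarith [sq_pos_of_ne_zero hk₀]
    refine mul_left_cancel₀ hp.ne_zero ?_
    rw [hk₀, mul_zero] at hk
    linear_combination x ^ 2 * hst - s ^ 2 * hxy + n * (x * t + s * y) * hk
  have hdvd : p ∣ (x * t - s * y) * (x * t + s * y) :=
    ⟨t ^ 2 - y ^ 2, by linear_combination y ^ 2 * hst - t ^ 2 * hxy⟩
  rcases hp.dvd_or_dvd hdvd with h | h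
  · exact sq_eq_of_dvd s hst h
  · simpa only [neg_sq] using sq_eq_of_dvd (-s) (by rwa [neg_sq]) (by rwa [neg_mul, sub_neg_eq_add])

section QuarticCharacters

open Complex ComplexConjugate

lemma exists_int_eq_add_mul_I_of_mem_adjoin {z : ℂ} (hz : z ∈ Algebra.adjoin ℤ {I}) :
    ∃ m n : ℤ, z = m + n * I := by
  have hle : Algebra.adjoin ℤ {I} ≤ GaussianInt.toComplex.toIntAlgHom.range :=
    Algebra.adjoin_le (Set.singleton_subset_iff.mpr ⟨⟨0, 1⟩, by simp [GaussianInt.toComplex_def]⟩)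
  obtain ⟨w, rfl⟩ := hle hz
  exact ⟨w.re, w.im, GaussianInt.toComplex_def w⟩

variable {F : Type*} [Field F] [Fintype F] {χ : MulChar F ℂ}

lemma jacobiSum_self_sq (hχ : χ ^ 4 = 1) :
    jacobiSum χ (χ ^ 2) = χ (-1) * jacobiSum χ χ := by
  rw [jacobiSum_eq_apply_neg_one_mul, ← pow_succ', inv_eq_of_mul_eq_one_right]
  rw [← pow_succ, hχ]

lemma jacobiSum_cube_cube (hχ : χ ^ 4 = 1) :
    jacobiSum (χ ^ 3) (χ ^ 3) = conj (jacobiSum χ χ) := by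
  have hinv : χ ^ 3 = χ⁻¹ := eq_inv_of_mul_eq_one_left (by rw [← pow_succ, hχ])
  rw [hinv, jacobiSum_inv_inv]

lemma jacobiSum_cube_sq (hχ : χ ^ 4 = 1) :
    jacobiSum (χ ^ 3) (χ ^ 2) = conj (jacobiSum χ (χ ^ 2)) := by
  have hinv₃ : χ ^ 3 = χ⁻¹ := eq_inv_of_mul_eq_one_left (by rw [← pow_succ, hχ])
  have hinv₂ : (χ ^ 2)⁻¹ = χ ^ 2 := inv_eq_of_mul_eq_one_right (by rw [← pow_add, hχ])
  rw [← jacobiSum_inv_inv, hinv₂, hinv₃]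

lemma sixteen_mul_cyclotomicNumber_one_I (hχ : orderOf χ = 4) (hneg : χ (-1) = -1) :
    (16 * cyclotomicNumber χ 1 I : ℝ) =
      Fintype.card F + 1 - 2 * (jacobiSum χ χ).re - 4 * (jacobiSum χ χ).im := by
  have h4 : χ ^ 4 = 1 := hχ ▸ pow_orderOf_eq_one χ
  have h1 : χ ≠ 1 := by rintro rfl; simp at hχ
  have h2 : χ ^ 2 ≠ 1 := pow_ne_one_of_lt_orderOf two_ne_zero (by omega)
  have h3 : χ ^ 3 ≠ 1 := pow_ne_one_of_lt_orderOf three_ne_zero (by omega)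
  have hneg2 : (χ ^ 2) (-1) = 1 := by rw [MulChar.pow_apply' χ two_ne_zero, hneg]; norm_num
  have hneg3 : (χ ^ 3) (-1) = -1 := by rw [MulChar.pow_apply' χ three_ne_zero, hneg]; norm_num
  have j13 : jacobiSum χ (χ ^ 3) = 1 := by
    have hinv : χ ^ 3 = χ⁻¹ := eq_inv_of_mul_eq_one_left (by rw [← pow_succ, h4])
    rw [hinv, jacobiSum_nontrivial_inv h1, hneg, neg_neg]
  have j22 : jacobiSum (χ ^ 2) (χ ^ 2) = -1 := by
    have hinv : (χ ^ 2)⁻¹ = χ ^ 2 := inv_eq_of_mul_eq_one_right (by rw [← pow_add, h4])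
    simpa only [hinv, hneg2] using jacobiSum_nontrivial_inv h2
  have hexpand := sq_mul_cyclotomicNumber four_ne_zero h4 (one_pow 4) I_pow_four
  simp only [sum_range_succ, sum_range_zero, pow_zero, pow_one, MulChar.one_apply isUnit_one.neg,
    hneg, hneg2, hneg3, jacobiSum_one_one, jacobiSum_one_nontrivial h1, jacobiSum_one_nontrivial h2,
    jacobiSum_one_nontrivial h3, jacobiSum_comm χ 1, jacobiSum_comm (χ ^ 2) 1,
    jacobiSum_comm (χ ^ 3) 1, jacobiSum_comm (χ ^ 2) χ, jacobiSum_comm (χ ^ 3) χ,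
    jacobiSum_comm (χ ^ 2) (χ ^ 3), jacobiSum_cube_sq h4, jacobiSum_self_sq h4,
    jacobiSum_cube_cube h4, j13, j22, inv_one, one_pow, inv_I, map_mul, map_neg, map_one] at hexpand
  have hconj : (16 * cyclotomicNumber χ 1 I : ℂ) = Fintype.card F + 1 -
      (jacobiSum χ χ + conj (jacobiSum χ χ)) + 2 * I * (jacobiSum χ χ - conj (jacobiSum χ χ)) := by
    push_cast at hexpand
    linear_combination hexpand +
      (jacobiSum χ χ + (1 + 2 * I) * conj (jacobiSum χ χ) - 2 + 2 * I) * I_sq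
  rw [add_conj, sub_conj] at hconj
  rw [← ofReal_inj]
  push_cast at hconj ⊢
  linear_combination hconj + 4 * (jacobiSum χ χ).im * I_sq

lemma exists_jacobiSum_self_eq (hχ : orderOf χ = 4) :
    ∃ s t : ℤ, Odd s ∧ (Fintype.card F : ℤ) = s ^ 2 + 4 * t ^ 2 ∧
      jacobiSum χ χ = s + 2 * t * I := by
  have h4 : χ ^ 4 = 1 := hχ ▸ pow_orderOf_eq_one χ
  have h1 : χ ≠ 1 := by rintro rfl; simp at hχ
  have h2 : χ * χ ≠ 1 := sq χ ▸ pow_ne_one_of_lt_orderOf two_ne_zero (by omega)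
  obtain ⟨z, hz, hJz⟩ := exists_jacobiSum_eq_neg_one_add (by norm_num) h4 h4
    (hχ ▸ χ.orderOf_dvd_card_sub_one) isPrimitiveRoot_I
  obtain ⟨m, n, rfl⟩ := exists_int_eq_add_mul_I_of_mem_adjoin hz
  have hJ : jacobiSum χ χ = (2 * n - 1 : ℝ) + (-2 * m : ℝ) * I := by
    rw [hJz]
    push_cast
    linear_combination (m + n * I - 2 * n) * I_sq
  have hchar : ringChar ℂ ≠ ringChar F := by
    rw [ringChar.eq_zero]
    exact (CharP.ringChar_ne_zero_of_finite F).symm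
  have hnorm : normSq (jacobiSum χ χ) = Fintype.card F := by
    rw [← ofReal_inj, ← mul_conj, ← jacobiSum_inv_inv, ofReal_natCast]
    exact jacobiSum_mul_jacobiSum_inv hchar h1 h1 h2
  refine ⟨2 * n - 1, -m, ⟨n - 1, by ring⟩, ?_, by rw [hJ]; push_cast; ring⟩
  rw [hJ, normSq_add_mul_I] at hnorm
  rify
  linear_combination -hnorm

section Periods

variable {ψ : AddChar F ℂ}

lemma four_mul_gaussPeriod (hχ : χ ^ 4 = 1) {c : ℂ} (hc : c ^ 4 = 1) : 4 * gaussPeriod χ ψ c =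
    gaussSum 1 ψ + c⁻¹ * gaussSum χ ψ + c⁻¹ ^ 2 * gaussSum (χ ^ 2) ψ +
      c⁻¹ ^ 3 * gaussSum (χ ^ 3) ψ := by
  simpa [sum_range_succ] using natCast_mul_gaussPeriod four_ne_zero hχ ψ hc

lemma four_mul_gaussPeriod_one (hχ : χ ^ 4 = 1) : 4 * gaussPeriod χ ψ 1 =
    gaussSum 1 ψ + gaussSum χ ψ + gaussSum (χ ^ 2) ψ + gaussSum (χ ^ 3) ψ := by
  simpa using four_mul_gaussPeriod hχ (one_pow 4)

lemma four_mul_gaussPeriod_I (hχ : χ ^ 4 = 1) : 4 * gaussPeriod χ ψ I =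
    gaussSum 1 ψ - I * gaussSum χ ψ - gaussSum (χ ^ 2) ψ + I * gaussSum (χ ^ 3) ψ := by
  rw [four_mul_gaussPeriod hχ I_pow_four, inv_I, neg_sq, I_sq, Odd.neg_pow (by decide), I_pow_three]
  ring

lemma four_mul_gaussPeriod_neg_one (hχ : χ ^ 4 = 1) : 4 * gaussPeriod χ ψ (-1) =
    gaussSum 1 ψ - gaussSum χ ψ + gaussSum (χ ^ 2) ψ - gaussSum (χ ^ 3) ψ := by
  rw [four_mul_gaussPeriod hχ (by norm_num)]
  ring

lemma four_mul_gaussPeriod_neg_I (hχ : χ ^ 4 = 1) : 4 * gaussPeriod χ ψ (-I) =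
    gaussSum 1 ψ + I * gaussSum χ ψ - gaussSum (χ ^ 2) ψ - I * gaussSum (χ ^ 3) ψ := by
  rw [four_mul_gaussPeriod hχ (by rw [Even.neg_pow (by decide), I_pow_four]), inv_neg, inv_I,
    neg_neg, I_pow_three, I_sq]
  ring

lemma sum_gaussPeriod_quartic (hχ : χ ^ 4 = 1) (hψ : ψ ≠ 1) :
    gaussPeriod χ ψ 1 + gaussPeriod χ ψ I + gaussPeriod χ ψ (-1) + gaussPeriod χ ψ (-I) = -1 := by
  linear_combination (four_mul_gaussPeriod_one hχ + four_mul_gaussPeriod_I hχ +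
    four_mul_gaussPeriod_neg_one hχ + four_mul_gaussPeriod_neg_I hχ) / 4 + gaussSum_one_left hψ

lemma alternating_sum_gaussPeriod_quartic (hχ : χ ^ 4 = 1) :
    gaussPeriod χ ψ 1 + gaussPeriod χ ψ (-1) - gaussPeriod χ ψ I - gaussPeriod χ ψ (-I) =
      gaussSum (χ ^ 2) ψ := by
  linear_combination (four_mul_gaussPeriod_one hχ - four_mul_gaussPeriod_I hχ +
    four_mul_gaussPeriod_neg_one hχ - four_mul_gaussPeriod_neg_I hχ) / 4

lemma two_mul_gaussPeriod_one_sub (hχ : χ ^ 4 = 1) :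
    2 * (gaussPeriod χ ψ 1 - gaussPeriod χ ψ (-1)) = gaussSum χ ψ + gaussSum (χ ^ 3) ψ := by
  linear_combination (four_mul_gaussPeriod_one hχ - four_mul_gaussPeriod_neg_one hχ) / 2

lemma two_mul_I_mul_gaussPeriod_I_sub (hχ : χ ^ 4 = 1) :
    2 * I * (gaussPeriod χ ψ I - gaussPeriod χ ψ (-I)) = gaussSum χ ψ - gaussSum (χ ^ 3) ψ := by
  linear_combination I * (four_mul_gaussPeriod_I hχ - four_mul_gaussPeriod_neg_I hχ) / 2 -
    (gaussSum χ ψ - gaussSum (χ ^ 3) ψ) * I_sq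

lemma gaussPeriod_sub_sq_add_sub_sq (hχ : orderOf χ = 4) (hneg : χ (-1) = -1)
    (hψ : ψ.IsPrimitive) :
    (gaussPeriod χ ψ 1 - gaussPeriod χ ψ (-1)) ^ 2 +
      (gaussPeriod χ ψ I - gaussPeriod χ ψ (-I)) ^ 2 = -Fintype.card F := by
  have h4 : χ ^ 4 = 1 := hχ ▸ pow_orderOf_eq_one χ
  have h1 : χ ≠ 1 := by rintro rfl; simp at hχ
  have hprod : gaussSum χ ψ * gaussSum (χ ^ 3) ψ = -Fintype.card F := by
    simpa [hχ, hneg] using gaussSum_mul_gaussSum_pow_orderOf_sub_one h1 hψ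
  have hre := two_mul_gaussPeriod_one_sub (ψ := ψ) h4
  have him := two_mul_I_mul_gaussPeriod_I_sub (ψ := ψ) h4
  set A := gaussPeriod χ ψ 1 - gaussPeriod χ ψ (-1)
  set B := gaussPeriod χ ψ I - gaussPeriod χ ψ (-I)
  calc A ^ 2 + B ^ 2 = ((2 * A) ^ 2 - (2 * I * B) ^ 2) / 4 := by linear_combination B ^ 2 * I_sq
    _ = gaussSum χ ψ * gaussSum (χ ^ 3) ψ := by rw [hre, him]; ring
    _ = -Fintype.card F := hprod

lemma gaussPeriod_sub_mul_sub (hχ : orderOf χ = 4) :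
    2 * ((gaussPeriod χ ψ 1 - gaussPeriod χ ψ (-1)) * (gaussPeriod χ ψ I - gaussPeriod χ ψ (-I))) =
      (jacobiSum χ χ).im * gaussSum (χ ^ 2) ψ := by
  have h4 : χ ^ 4 = 1 := hχ ▸ pow_orderOf_eq_one χ
  have h2 : χ ^ 2 ≠ 1 := pow_ne_one_of_lt_orderOf two_ne_zero (by omega)
  have h6 : χ ^ 3 * χ ^ 3 = χ ^ 2 := by
    rw [← pow_add, pow_add χ 4 2, h4, one_mul]
  have hsq : gaussSum χ ψ ^ 2 = gaussSum (χ ^ 2) ψ * jacobiSum χ χ := by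
    rw [sq, sq, jacobiSum_mul_nontrivial (sq χ ▸ h2)]
  have hsq' : gaussSum (χ ^ 3) ψ ^ 2 = gaussSum (χ ^ 2) ψ * conj (jacobiSum χ χ) := by
    rw [sq, ← jacobiSum_mul_nontrivial (h6 ▸ h2), h6, jacobiSum_cube_cube h4]
  have hre := two_mul_gaussPeriod_one_sub (ψ := ψ) h4
  have him := two_mul_I_mul_gaussPeriod_I_sub (ψ := ψ) h4
  set A := gaussPeriod χ ψ 1 - gaussPeriod χ ψ (-1)
  set B := gaussPeriod χ ψ I - gaussPeriod χ ψ (-I)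
  refine mul_left_cancel₀ (mul_ne_zero two_ne_zero I_ne_zero) ?_
  calc 2 * I * (2 * (A * B)) = 2 * A * (2 * I * B) := by ring
    _ = gaussSum χ ψ ^ 2 - gaussSum (χ ^ 3) ψ ^ 2 := by rw [hre, him]; ring
    _ = (jacobiSum χ χ - conj (jacobiSum χ χ)) * gaussSum (χ ^ 2) ψ := by rw [hsq, hsq']; ring
    _ = 2 * I * ((jacobiSum χ χ).im * gaussSum (χ ^ 2) ψ) := by rw [sub_conj]; push_cast; ring

lemma gaussSum_pow_two_sq (hχ : orderOf χ = 4) (hneg : χ (-1) = -1) (hψ : ψ.IsPrimitive) :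
    gaussSum (χ ^ 2) ψ ^ 2 = Fintype.card F := by
  have hord : orderOf (χ ^ 2) = 2 := by rw [orderOf_pow, hχ]; norm_num
  have h2 : χ ^ 2 ≠ 1 := pow_ne_one_of_lt_orderOf two_ne_zero (by omega)
  have hneg2 : (χ ^ 2) (-1) = 1 := by rw [MulChar.pow_apply' χ two_ne_zero, hneg]; norm_num
  simpa only [hord, hneg2, Nat.reduceSub, pow_one, one_mul, ← sq (gaussSum _ ψ)] using
    gaussSum_mul_gaussSum_pow_orderOf_sub_one h2 hψ

lemma four_mul_gaussPeriod_mul_gaussPeriod (hχ : orderOf χ = 4) (hneg : χ (-1) = -1)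
    (hψ : ψ.IsPrimitive) :
    4 * (gaussPeriod χ ψ (-1) + 2 * gaussPeriod χ ψ (-I) + 3 * gaussPeriod χ ψ 1) *
        (gaussPeriod χ ψ 1 + 2 * gaussPeriod χ ψ I + 3 * gaussPeriod χ ψ (-1)) =
      -2 * (3 - 2 * (jacobiSum χ χ).im) * (gaussPeriod χ ψ 1 + gaussPeriod χ ψ (-1) -
        gaussPeriod χ ψ I - gaussPeriod χ ψ (-I)) + 5 * Fintype.card F + 9 := by
  have h4 : χ ^ 4 = 1 := hχ ▸ pow_orderOf_eq_one χ
  have hψ₁ : ψ ≠ 1 := by simpa only [AddChar.mulShift_one] using hψ one_ne_zero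
  have hsum := sum_gaussPeriod_quartic h4 hψ₁
  have hsq := gaussSum_pow_two_sq hχ hneg hψ
  have hadd := gaussPeriod_sub_sq_add_sub_sq hχ hneg hψ
  have hmul := gaussPeriod_sub_mul_sub (ψ := ψ) hχ
  rw [← alternating_sum_gaussPeriod_quartic h4] at hsq hmul
  set A := gaussPeriod χ ψ 1
  set B := gaussPeriod χ ψ I
  set C := gaussPeriod χ ψ (-1)
  set D := gaussPeriod χ ψ (-I)
  linear_combination -4 * hadd + 4 * hmul + hsq +
    (2 * (2 * (A + C) + (B + D)) + (A + C - B - D) - 3) * (3 * hsum)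

end Periods

lemma jacobiSum_self_im_eq_two_mul (hF : (Fintype.card F).Prime) (hχ : orderOf χ = 4)
    (hneg : χ (-1) = -1) {x y : ℤ} (hxy : (Fintype.card F : ℤ) = x ^ 2 + 4 * y ^ 2)
    (hN : (16 * cyclotomicNumber χ 1 I : ℤ) = Fintype.card F + 1 + 2 * x - 8 * y) :
    (jacobiSum χ χ).im = 2 * y := by
  obtain ⟨s, t, hs, hst, hJ⟩ := exists_jacobiSum_self_eq hχ
  have hre : (jacobiSum χ χ).re = s := by simp [hJ]
  have him : (jacobiSum χ χ).im = 2 * t := by simp [hJ]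
  have hN' := sixteen_mul_cyclotomicNumber_one_I hχ hneg
  rw [hre, him] at hN'
  have hlin : 2 * x - 8 * y = -2 * s - 8 * t := by
    rify at hN ⊢
    linarith
  have hxs : x ^ 2 = s ^ 2 := sq_eq_sq_of_prime_eq_sq_add_mul_sq
    (Nat.prime_iff_prime_int.mp hF) (by norm_num) hxy hst
  have hty : t = y := by
    obtain ⟨k, hk⟩ := hs
    rcases sq_eq_sq_iff_eq_or_eq_neg.mp hxs with h | h <;> omega
  rw [him, hty]

end QuarticCharacters

section CyclotomicClasses

/-- `∑ t ∈ D_i, b ^ t`, the period of order 4 evaluated at an arbitrary base `b`: it is a Gaussian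
period when `b` is a primitive `p`-th root of unity, and `eta4` when `b = 4`. -/
def cyclotomicPeriod {R : Type*} [Semiring R] (p θ : ℕ) (b : R) (i : ℕ) : R :=
  ∑ t ∈ cycD p θ i, b ^ t

open Polynomial in
lemma aeval_cyclotomicPeriod_X {R : Type*} [Ring R] (b : R) (p θ i : ℕ) :
    aeval b (cyclotomicPeriod p θ (X : ℤ[X]) i) = cyclotomicPeriod p θ b i := by
  simp only [cyclotomicPeriod, map_sum, map_pow, aeval_X]

variable {p θ : ℕ} [Fact p.Prime] {K : Type*} [Field K] [DecidableEq K] {χ : MulChar (ZMod p) K}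

lemma cycD_eq_image_val (hθ : IsPrimitiveRoot (θ : ZMod p) (p - 1)) (hχ : IsPrimitiveRoot (χ θ) 4)
    {i : ℕ} (hi : i < 4) :
    cycD p θ i = ({a | χ a = χ θ ^ i} : Finset (ZMod p)).image ZMod.val := by
  have hdvd : 4 ∣ p - 1 := hχ.dvd_of_pow_eq_one _ (by rw [← map_pow, hθ.pow_eq_one, map_one])
  ext t
  simp only [cycD, mem_image, mem_range, mem_filter_univ]
  constructor
  · rintro ⟨j, -, rfl⟩
    refine ⟨(θ ^ (i + 4 * j) : ℕ), ?_, ZMod.val_natCast p _⟩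
    rw [Nat.cast_pow, map_pow, pow_add, pow_mul, hχ.pow_eq_one, one_pow, mul_one]
  · rintro ⟨a, ha, rfl⟩
    have ha₀ : a ≠ 0 := by
      rintro rfl
      exact pow_ne_zero i (hχ.ne_zero four_ne_zero) (ha ▸ χ.map_zero)
    have : NeZero (p - 1) := ⟨(Nat.sub_pos_of_lt (Fact.out : p.Prime).one_lt).ne'⟩
    obtain ⟨m, hm, rfl⟩ := hθ.eq_pow_of_pow_eq_one (ZMod.pow_card_sub_one_eq_one ha₀)
    have hm₄ : m % 4 = i := by
      refine hχ.pow_inj (Nat.mod_lt m four_pos) hi ?_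
      rw [← ha, map_pow, hχ.eq_orderOf, pow_mod_orderOf]
    refine ⟨m / 4, by omega, ?_⟩
    rw [← hm₄, Nat.mod_add_div, ← ZMod.val_natCast, Nat.cast_pow]

lemma cyclotomicPeriod_eq_gaussPeriod (hθ : IsPrimitiveRoot (θ : ZMod p) (p - 1))
    (hχ : IsPrimitiveRoot (χ θ) 4) {ζ : K} (hζ : ζ ^ p = 1) {i : ℕ} (hi : i < 4) :
    cyclotomicPeriod p θ ζ i = gaussPeriod χ (AddChar.zmodChar p hζ) (χ θ ^ i) := by
  rw [cyclotomicPeriod, cycD_eq_image_val hθ hχ hi, sum_image (ZMod.val_injective p).injOn]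
  rfl

lemma card_filter_cycD_eq_cyclotomicNumber (hθ : IsPrimitiveRoot (θ : ZMod p) (p - 1))
    (hχ : IsPrimitiveRoot (χ θ) 4) {i j : ℕ} (hi : i < 4) (hj : j < 4) :
    #{a ∈ cycD p θ i | (a + 1) % p ∈ cycD p θ j} =
      cyclotomicNumber χ (χ θ ^ i) (χ θ ^ j) := by
  have hsucc (a : ZMod p) : (a.val + 1) % p = (a + 1).val := by
    rw [← ZMod.val_natCast, Nat.cast_succ, ZMod.natCast_zmod_val]
  rw [cycD_eq_image_val hθ hχ hi, cycD_eq_image_val hθ hχ hj, filter_image,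
    card_image_of_injective _ (ZMod.val_injective p), filter_filter, cyclotomicNumber]
  simp only [hsucc, (ZMod.val_injective p).mem_finset_image, mem_filter_univ]

end CyclotomicClasses

open Polynomial in
lemma geom_sum_dvd_aeval {p : ℕ} (hp : p.Prime) {K : Type*} [Field K] [CharZero K] {ζ : K}
    (hζ : IsPrimitiveRoot ζ p) {P : ℤ[X]} (hP : aeval ζ P = 0) {R : Type*} [Ring R] (b : R) :
    ∑ i ∈ range p, b ^ i ∣ aeval b P := by
  have : Fact p.Prime := ⟨hp⟩
  have hdvd : cyclotomic p ℤ ∣ P := by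
    rw [cyclotomic_eq_minpoly hζ hp.pos]
    exact minpoly.isIntegrallyClosed_dvd (hζ.isIntegral hp.pos) hP
  simpa [cyclotomic_prime] using map_dvd (aeval b) hdvd

open Complex in
lemma four_mul_cyclotomicPeriod_mul_cyclotomicPeriod {p : ℕ} (hp : p.Prime) (hp8 : p % 8 = 5)
    {x y : ℤ} (hxy : (p : ℤ) = x ^ 2 + 4 * y ^ 2) {θ : ℕ}
    (hθ : IsPrimitiveRoot (θ : ZMod p) (p - 1))
    (hy : 16 * (#{a ∈ cycD p θ 0 | (a + 1) % p ∈ cycD p θ 1} : ℤ) = p + 1 + 2 * x - 8 * y)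
    {ζ : ℂ} (hζ : IsPrimitiveRoot ζ p) :
    4 * (cyclotomicPeriod p θ ζ 2 + 2 * cyclotomicPeriod p θ ζ 3 + 3 * cyclotomicPeriod p θ ζ 0) *
        (cyclotomicPeriod p θ ζ 0 + 2 * cyclotomicPeriod p θ ζ 1 + 3 * cyclotomicPeriod p θ ζ 2) =
      -2 * (3 - 4 * y) * (cyclotomicPeriod p θ ζ 0 + cyclotomicPeriod p θ ζ 2 -
        cyclotomicPeriod p θ ζ 1 - cyclotomicPeriod p θ ζ 3) + 5 * p + 9 := by
  have : Fact p.Prime := ⟨hp⟩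
  have hcard : Fintype.card (ZMod p) = p := ZMod.card p
  have hθ' : IsPrimitiveRoot (θ : ZMod p) (Fintype.card (ZMod p) - 1) := by rwa [hcard]
  obtain ⟨χ, hχθ, hχ⟩ := exists_mulChar_apply_eq_and_orderOf_eq hθ' (by omega) isPrimitiveRoot_I
  have hneg : χ (-1) = -1 :=
    apply_neg_one_of_card_mod_eight_eq_five (by omega) hθ' (by rw [hχθ, I_sq])
  have hχθ₄ : IsPrimitiveRoot (χ θ) 4 := hχθ ▸ isPrimitiveRoot_I
  have him : (jacobiSum χ χ).im = 2 * y := by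
    rw [card_filter_cycD_eq_cyclotomicNumber hθ hχθ₄ four_pos (by norm_num), hχθ, pow_zero,
      pow_one] at hy
    exact jacobiSum_self_im_eq_two_mul (by rwa [hcard]) hχ hneg (by rwa [hcard]) (by rwa [hcard])
  have hperiod {i : ℕ} (hi : i < 4) := cyclotomicPeriod_eq_gaussPeriod hθ hχθ₄ hζ.pow_eq_one hi
  have hid := four_mul_gaussPeriod_mul_gaussPeriod hχ hneg
    (AddChar.zmodChar_primitive_of_primitive_root p hζ)
  rw [hcard, him] at hid
  simp only [hperiod, Nat.ofNat_pos, Nat.one_lt_ofNat, Nat.reduceLT, hχθ, pow_zero, pow_one, I_sq,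
    I_pow_three]
  push_cast at hid
  linear_combination hid

open Polynomial in
theorem lemma5_part4_general {R : Type*} [Ring R] (b : R)
    (p : ℕ) (hp : p.Prime) (hp8 : p % 8 = 5)
    (x y : ℤ) (hxy : (p : ℤ) = x ^ 2 + 4 * y ^ 2)
    (θ : ℕ) (hθ : IsPrimitiveRoot (θ : ZMod p) (p - 1))
    (hy : 16 * (#{a ∈ cycD p θ 0 | (a + 1) % p ∈ cycD p θ 1} : ℤ) = p + 1 + 2 * x - 8 * y) :
    ∑ i ∈ range p, b ^ i ∣
      (-2 * (3 - 4 * y) * (cyclotomicPeriod p θ b 0 + cyclotomicPeriod p θ b 2 -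
        cyclotomicPeriod p θ b 1 - cyclotomicPeriod p θ b 3) + 5 * p + 9) -
      4 * (cyclotomicPeriod p θ b 2 + 2 * cyclotomicPeriod p θ b 3 +
          3 * cyclotomicPeriod p θ b 0) *
        (cyclotomicPeriod p θ b 0 + 2 * cyclotomicPeriod p θ b 1 +
          3 * cyclotomicPeriod p θ b 2) := by
  have hζ := Complex.isPrimitiveRoot_exp p hp.ne_zero
  let η : ℕ → ℤ[X] := cyclotomicPeriod p θ X
  let P : ℤ[X] := (-2 * (3 - 4 * (y : ℤ[X])) * (η 0 + η 2 - η 1 - η 3) + 5 * (p : ℤ[X]) + 9) -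
    4 * (η 2 + 2 * η 3 + 3 * η 0) * (η 0 + 2 * η 1 + 3 * η 2)
  have hP : aeval (Complex.exp (2 * Real.pi * Complex.I / p)) P = 0 := by
    simp only [P, η, map_sub, map_add, map_mul, map_neg, map_ofNat, map_natCast, map_intCast,
      aeval_cyclotomicPeriod_X, sub_eq_zero]
    exact (four_mul_cyclotomicPeriod_mul_cyclotomicPeriod hp hp8 hxy hθ hy hζ).symm
  simpa only [P, η, map_sub, map_add, map_mul, map_neg, map_ofNat, map_natCast, map_intCast,
    aeval_cyclotomicPeriod_X] using geom_sum_dvd_aeval hp hζ hP b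

theorem lemma5_part4
    (p : ℕ) (hp : p.Prime) (hp8 : p % 8 = 5)
    (x y : ℤ) (hx : x % 4 = 1) (hxy : (p : ℤ) = x ^ 2 + 4 * y ^ 2)
    (θ : ℕ) (hθ : IsPrimitiveRoot (θ : ZMod p) (p - 1))
    (hy : 16 * (((cycD p θ 0).filter (fun a => (a + 1) % p ∈ cycD p θ 1)).card : ℤ)
        = (p : ℤ) + 1 + 2 * x - 8 * y)
    :
    4 * (eta4 p θ 2 + 2 * eta4 p θ 3 + 3 * eta4 p θ 0) * (eta4 p θ 0 + 2 * eta4 p θ 1 + 3 * eta4 p θ 2)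
      ≡ -2 * (3 - 4 * y) * Hval p θ + 5 * (p : ℤ) + 9 [ZMOD ((4 : ℤ) ^ p - 1) / 3] := by
  have hmod : ((4 : ℤ) ^ p - 1) / 3 = ∑ i ∈ range p, 4 ^ i := by
    rw [← geom_sum_mul (4 : ℤ) p]; omega
  rw [hmod, Int.modEq_iff_dvd]
  exact lemma5_part4_general 4 p hp hp8 x y hxy θ hθ hy
end
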